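/- Let m be a positive integer and let p be a probability measure on ℝ^m with ∫ ‖x‖² dp(x) < ∞. Let m̄ := ∫ x dp(x) be its mean and S := ∫ (x − m̄)(x − m̄)ᵀ dp(x) its covariance matrix, and assume S is positive definite. For μ ∈ ℝ^m and a symmetric positive definite real m×m matrix Σ, write q_{μ,Σ}(x) := (2π)^{−m/2} (det Σ)^{−1/2} exp(−½ (x − μ)ᵀ Σ⁻¹ (x − μ)). Then for every such (μ, Σ), −∫ log q_{μ,Σ}(x) dp(x) ≥ −∫ log q_{m̄,S}(x) dp(x), with equality if and only if μ = m̄ and Σ = S. -/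

import Mathlib

open Matrix MeasureTheory

/-!
Let `m̄` and `S` be the mean and covariance of `p`. Shifting the centre of the second moments from
`m̄` to `μ` adds `(m̄ - μ)(m̄ - μ)ᵀ` to `S`, so the cross-entropy of `p` relative to the Gaussian
`q_{μ,V}` exceeds the one relative to `q_{m̄,S}` by
`(tr (V⁻¹ S) - log det (V⁻¹ S) - m) / 2 + (m̄ - μ)ᵀ V⁻¹ (m̄ - μ) / 2`.
The second term is nonnegative and vanishes only at `μ = m̄`. The matrix `V⁻¹ S` is similar to a
positive definite one, so the first term is a sum of `(t - 1 - log t) / 2` over its eigenvalues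
`t > 0`, which is nonnegative and vanishes only at `V⁻¹ S = 1`.
-/

section SteinLoss

variable {ι : Type*} [Fintype ι] [DecidableEq ι]

/-- Stein's loss `tr A - log det A - n` of an `n × n` matrix, which measures how far a positive
definite `A` is from the identity. It is meant for `0 < det A`: otherwise `Real.log` reads
`log |det A|`, or `0` if `det A = 0`. -/
noncomputable def steinLoss (A : Matrix ι ι ℝ) : ℝ :=
  A.trace - Real.log A.det - Fintype.card ι

lemma steinLoss_mul_comm (A B : Matrix ι ι ℝ) : steinLoss (A * B) = steinLoss (B * A) := by
  rw [steinLoss, steinLoss, trace_mul_comm, det_mul_comm]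

@[simp]
lemma steinLoss_one : steinLoss (1 : Matrix ι ι ℝ) = 0 := by
  simp [steinLoss]

lemma steinLoss_eq_sum_eigenvalues {A : Matrix ι ι ℝ} (hA : A.PosDef) :
    steinLoss A =
      ∑ i, (hA.isHermitian.eigenvalues i - 1 - Real.log (hA.isHermitian.eigenvalues i)) := by
  have log_det : Real.log A.det = ∑ i, Real.log (hA.isHermitian.eigenvalues i) := by
    rw [hA.isHermitian.det_eq_prod_eigenvalues]
    exact Real.log_prod fun i _ => (hA.eigenvalues_pos i).ne'
  have trace_eq : A.trace = ∑ i, hA.isHermitian.eigenvalues i :=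
    hA.isHermitian.trace_eq_sum_eigenvalues
  rw [steinLoss, log_det, trace_eq, Finset.sum_sub_distrib, Finset.sum_sub_distrib]
  simp only [Finset.sum_const, Finset.card_univ, nsmul_eq_mul, mul_one]
  ring

lemma steinLoss_nonneg {A : Matrix ι ι ℝ} (hA : A.PosDef) : 0 ≤ steinLoss A := by
  rw [steinLoss_eq_sum_eigenvalues hA]
  exact Finset.sum_nonneg fun i _ =>
    sub_nonneg.2 (Real.log_le_sub_one_of_pos (hA.eigenvalues_pos i))

lemma eq_one_of_eigenvalues_eq_one {𝕜 : Type*} [RCLike 𝕜] {A : Matrix ι ι 𝕜}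
    (hA : A.IsHermitian) (h : ∀ i, hA.eigenvalues i = 1) : A = 1 := by
  rw [hA.spectral_theorem, funext h]
  simp only [Function.comp_def, diagonal_one, map_one]

lemma steinLoss_eq_zero_iff {A : Matrix ι ι ℝ} (hA : A.PosDef) : steinLoss A = 0 ↔ A = 1 := by
  refine ⟨fun h => eq_one_of_eigenvalues_eq_one hA.isHermitian fun i => ?_, ?_⟩
  · rw [steinLoss_eq_sum_eigenvalues hA, Finset.sum_eq_zero_iff_of_nonneg fun i _ =>
      sub_nonneg.2 (Real.log_le_sub_one_of_pos (hA.eigenvalues_pos i))] at h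
    by_contra hne
    exact (sub_pos.2 (Real.log_lt_sub_one_of_pos (hA.eigenvalues_pos i) hne)).ne'
      (h i (Finset.mem_univ i))
  · rintro rfl
    exact steinLoss_one

open scoped ComplexOrder MatrixOrder Matrix.Norms.L2Operator in
lemma exists_isUnit_eq_conjTranspose_mul_self {𝕜 : Type*} [RCLike 𝕜] {A : Matrix ι ι 𝕜}
    (hA : A.PosDef) : ∃ B : Matrix ι ι 𝕜, IsUnit B ∧ A = Bᴴ * B :=
  CStarAlgebra.isStrictlyPositive_iff_eq_star_mul_self.1 hA.isStrictlyPositive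

lemma steinLoss_mul_nonneg {A B : Matrix ι ι ℝ} (hA : A.PosDef) (hB : B.PosDef) :
    0 ≤ steinLoss (A * B) := by
  obtain ⟨R, hR, rfl⟩ := exists_isUnit_eq_conjTranspose_mul_self hA
  rw [Matrix.mul_assoc, steinLoss_mul_comm]
  exact steinLoss_nonneg (hB.mul_mul_conjTranspose_same (vecMul_injective_of_isUnit hR))

lemma steinLoss_mul_eq_zero_iff {A B : Matrix ι ι ℝ} (hA : A.PosDef) (hB : B.PosDef) :
    steinLoss (A * B) = 0 ↔ A * B = 1 := by
  obtain ⟨R, hR, rfl⟩ := exists_isUnit_eq_conjTranspose_mul_self hA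
  rw [Matrix.mul_assoc, steinLoss_mul_comm, mul_eq_one_comm]
  exact steinLoss_eq_zero_iff (hB.mul_mul_conjTranspose_same (vecMul_injective_of_isUnit hR))

lemma steinLoss_inv_mul_eq_zero_iff {A B : Matrix ι ι ℝ} (hA : A.PosDef) (hB : B.PosDef) :
    steinLoss (A⁻¹ * B) = 0 ↔ A = B := by
  have := hA.isUnit.invertible
  rw [steinLoss_mul_eq_zero_iff hA.inv hB, inv_mul_eq_iff_eq_mul_of_invertible, Matrix.mul_one,
    eq_comm]

end SteinLoss

section QuadraticForm

variable {ι : Type*} [Fintype ι]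

lemma dotProduct_mulVec_eq_trace_mul_vecMulVec {R : Type*} [CommSemiring R] (A : Matrix ι ι R)
    (v w : ι → R) : v ⬝ᵥ (A *ᵥ w) = (A * vecMulVec w v).trace := by
  rw [mul_vecMulVec, trace_vecMulVec, dotProduct_comm]

lemma dotProduct_mulVec_eq_sum {R : Type*} [CommSemiring R] (A : Matrix ι ι R) (v w : ι → R) :
    v ⬝ᵥ (A *ᵥ w) = ∑ i, ∑ j, A i j * (w j * v i) := by
  rw [dotProduct_mulVec_eq_trace_mul_vecMulVec]
  simp only [trace, diag_apply, mul_apply, vecMulVec_apply]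

lemma dotProduct_mulVec_self_nonneg {A : Matrix ι ι ℝ} (hA : A.PosSemidef) (v : ι → ℝ) :
    0 ≤ v ⬝ᵥ (A *ᵥ v) := by
  simpa only [star_trivial] using hA.dotProduct_mulVec_nonneg v

lemma dotProduct_mulVec_self_eq_zero_iff {A : Matrix ι ι ℝ} (hA : A.PosDef) {v : ι → ℝ} :
    v ⬝ᵥ (A *ᵥ v) = 0 ↔ v = 0 := by
  refine ⟨fun h => by_contra fun hv => ?_, ?_⟩
  · exact (hA.dotProduct_mulVec_pos hv).ne' (by rwa [star_trivial])
  · rintro rfl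
    exact zero_dotProduct _

end QuadraticForm

section Moments

variable {ι : Type*} [Fintype ι]

/-- The matrix `∫ (x - c)(x - c)ᵀ dp(x)` of second moments of `p` about the point `c`. -/
noncomputable def secondMomentMatrix (p : Measure (ι → ℝ)) (c : ι → ℝ) : Matrix ι ι ℝ :=
  Matrix.of fun i j => ∫ x, (x i - c i) * (x j - c j) ∂p

/-- The covariance matrix of `p`: its second moments about its mean. -/
noncomputable def covarianceMatrix (p : Measure (ι → ℝ)) : Matrix ι ι ℝ :=
  secondMomentMatrix p (∫ x, x ∂p)

open ProbabilityTheory in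
lemma integral_sub_mul_sub_eq_covariance_add {Ω : Type*} [MeasurableSpace Ω] {P : Measure Ω}
    [IsProbabilityMeasure P] {X Y : Ω → ℝ} (hX : MemLp X 2 P) (hY : MemLp Y 2 P) (a b : ℝ) :
    ∫ ω, (X ω - a) * (Y ω - b) ∂P =
      cov[X, Y; P] + (∫ ω, X ω ∂P - a) * (∫ ω, Y ω ∂P - b) := by
  have hX₁ : Integrable X P := hX.integrable one_le_two
  have hY₁ : Integrable Y P := hY.integrable one_le_two
  calc ∫ ω, (X ω - a) * (Y ω - b) ∂P
      = cov[fun ω => X ω - a, fun ω => Y ω - b; P] +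
          (∫ ω, (X ω - a) ∂P) * (∫ ω, (Y ω - b) ∂P) :=
        (sub_eq_iff_eq_add.1
          (covariance_eq_sub (hX.sub (memLp_const a)) (hY.sub (memLp_const b))).symm)
    _ = cov[X, Y; P] + (∫ ω, X ω ∂P - a) * (∫ ω, Y ω ∂P - b) := by
        rw [covariance_sub_const_left hX₁, covariance_sub_const_right hY₁,
          integral_sub hX₁ (integrable_const a), integral_sub hY₁ (integrable_const b)]
        simp only [integral_const, probReal_univ, one_smul]

variable {p : Measure (ι → ℝ)}

lemma secondMomentMatrix_eq_covarianceMatrix_add [IsProbabilityMeasure p] (hp : MemLp id 2 p)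
    (c : ι → ℝ) :
    secondMomentMatrix p c =
      covarianceMatrix p + vecMulVec (∫ x, x ∂p - c) (∫ x, x ∂p - c) := by
  have mean_apply : ∀ i, (∫ x, x ∂p) i = ∫ x, x i ∂p :=
    eval_integral fun i => (hp.eval i).integrable one_le_two
  ext i j
  simp only [covarianceMatrix, secondMomentMatrix, Matrix.add_apply, of_apply, vecMulVec_apply,
    Pi.sub_apply, mean_apply]
  exact integral_sub_mul_sub_eq_covariance_add (hp.eval i) (hp.eval j) (c i) (c j)

variable [IsFiniteMeasure p]

lemma integrable_sub_mul_sub (hp : MemLp id 2 p) (c : ι → ℝ) (i j : ι) :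
    Integrable (fun x => (x i - c i) * (x j - c j)) p :=
  ((hp.eval i).sub (memLp_const (c i))).integrable_mul ((hp.eval j).sub (memLp_const (c j)))

lemma integrable_dotProduct_mulVec (hp : MemLp id 2 p) (c : ι → ℝ) (A : Matrix ι ι ℝ) :
    Integrable (fun x => (x - c) ⬝ᵥ (A *ᵥ (x - c))) p := by
  simp only [dotProduct_mulVec_eq_sum]
  exact integrable_finsetSum _ fun i _ => integrable_finsetSum _ fun j _ =>
    (integrable_sub_mul_sub hp c j i).const_mul (A i j)

lemma integral_dotProduct_mulVec_eq_trace (hp : MemLp id 2 p) (c : ι → ℝ) (A : Matrix ι ι ℝ) :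
    ∫ x, (x - c) ⬝ᵥ (A *ᵥ (x - c)) ∂p = (A * secondMomentMatrix p c).trace := by
  have integrable_term : ∀ i j, Integrable (fun x => A i j * ((x j - c j) * (x i - c i))) p :=
    fun i j => (integrable_sub_mul_sub hp c j i).const_mul (A i j)
  simp only [dotProduct_mulVec_eq_sum, Pi.sub_apply, trace, diag_apply, mul_apply,
    secondMomentMatrix, of_apply]
  rw [integral_finsetSum _ fun i _ => integrable_finsetSum _ fun j _ => integrable_term i j]
  refine Finset.sum_congr rfl fun i _ => ?_
  rw [integral_finsetSum _ fun j _ => integrable_term i j]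
  exact Finset.sum_congr rfl fun j _ => integral_const_mul _ _

end Moments

section CrossEntropy

/-- The cross-entropy `-E_p[log q]` of `p` relative to a density `q`. -/
noncomputable def crossEntropy {α : Type*} [MeasurableSpace α] (p : Measure α) (q : α → ℝ) : ℝ :=
  -∫ x, Real.log (q x) ∂p

variable {ι : Type*} [Fintype ι] [DecidableEq ι]

/-- The Lebesgue density of the Gaussian with mean `μ` and positive definite covariance `V`. -/
noncomputable def gaussianDensity (μ : ι → ℝ) (V : Matrix ι ι ℝ) (x : ι → ℝ) : ℝ :=
  (2 * Real.pi) ^ (-(Fintype.card ι : ℝ) / 2) * V.det ^ (-(1 : ℝ) / 2) *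
    Real.exp (-(1 / 2) * ((x - μ) ⬝ᵥ (V⁻¹ *ᵥ (x - μ))))

lemma log_gaussianDensity (μ : ι → ℝ) {V : Matrix ι ι ℝ} (hV : V.PosDef) (x : ι → ℝ) :
    Real.log (gaussianDensity μ V x) =
      -(Fintype.card ι * Real.log (2 * Real.pi) + Real.log V.det) / 2 -
        (x - μ) ⬝ᵥ (V⁻¹ *ᵥ (x - μ)) / 2 := by
  have det_pos := hV.det_pos
  rw [gaussianDensity, Real.log_mul (by positivity) (by positivity),
    Real.log_mul (by positivity) (by positivity), Real.log_exp, Real.log_rpow (by positivity),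
    Real.log_rpow det_pos]
  ring

variable {p : Measure (ι → ℝ)} [IsProbabilityMeasure p]

lemma crossEntropy_gaussianDensity (hp : MemLp id 2 p) (μ : ι → ℝ) {V : Matrix ι ι ℝ}
    (hV : V.PosDef) :
    crossEntropy p (gaussianDensity μ V) =
      (Fintype.card ι * Real.log (2 * Real.pi) + Real.log V.det +
        (V⁻¹ * secondMomentMatrix p μ).trace) / 2 := by
  simp only [crossEntropy, log_gaussianDensity μ hV]
  rw [integral_sub (integrable_const _) ((integrable_dotProduct_mulVec hp μ _).div_const 2),
    integral_const, integral_div, integral_dotProduct_mulVec_eq_trace hp, probReal_univ, one_smul]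
  ring

lemma crossEntropy_gaussianDensity_sub (hp : MemLp id 2 p) (hS : (covarianceMatrix p).PosDef)
    (μ : ι → ℝ) {V : Matrix ι ι ℝ} (hV : V.PosDef) :
    crossEntropy p (gaussianDensity μ V) -
        crossEntropy p (gaussianDensity (∫ x, x ∂p) (covarianceMatrix p)) =
      (steinLoss (V⁻¹ * covarianceMatrix p) +
        (∫ x, x ∂p - μ) ⬝ᵥ (V⁻¹ *ᵥ (∫ x, x ∂p - μ))) / 2 := by
  have log_det : Real.log (V⁻¹ * covarianceMatrix p).det =
      Real.log (covarianceMatrix p).det - Real.log V.det := by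
    rw [det_mul, det_nonsing_inv, Ring.inverse_eq_inv', Real.log_mul
      (inv_ne_zero hV.det_pos.ne') hS.det_pos.ne', Real.log_inv]
    ring
  rw [crossEntropy_gaussianDensity hp μ hV, crossEntropy_gaussianDensity hp _ hS,
    ← covarianceMatrix, nonsing_inv_mul _ hS.det_pos.ne'.isUnit, trace_one,
    secondMomentMatrix_eq_covarianceMatrix_add hp, Matrix.mul_add, trace_add,
    ← dotProduct_mulVec_eq_trace_mul_vecMulVec, steinLoss, log_det]
  ring

theorem stmt_10_general (hp : MemLp id 2 p) (hS : (covarianceMatrix p).PosDef) (μ : ι → ℝ)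
    {V : Matrix ι ι ℝ} (hV : V.PosDef) :
    crossEntropy p (gaussianDensity (∫ x, x ∂p) (covarianceMatrix p)) ≤
        crossEntropy p (gaussianDensity μ V) ∧
      (crossEntropy p (gaussianDensity μ V) =
          crossEntropy p (gaussianDensity (∫ x, x ∂p) (covarianceMatrix p)) ↔
        μ = ∫ x, x ∂p ∧ V = covarianceMatrix p) := by
  have loss_nonneg := steinLoss_mul_nonneg hV.inv hS
  have quad_nonneg := dotProduct_mulVec_self_nonneg hV.inv.posSemidef (∫ x, x ∂p - μ)
  rw [← sub_nonneg, ← sub_eq_zero, crossEntropy_gaussianDensity_sub hp hS μ hV]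
  refine ⟨div_nonneg (add_nonneg loss_nonneg quad_nonneg) zero_le_two, ?_⟩
  rw [div_eq_zero_iff, or_iff_left two_ne_zero, add_eq_zero_iff_of_nonneg loss_nonneg quad_nonneg,
    steinLoss_inv_mul_eq_zero_iff hV hS, dotProduct_mulVec_self_eq_zero_iff hV.inv,
    sub_eq_zero, and_comm, eq_comm (a := μ)]

end CrossEntropy

/-- The Gaussian with matched mean and covariance is the unique minimizer of
the cross-entropy `-E_p[log q_{μ,Σ}]` (equivalently, of `KL(p‖q_{μ,Σ})`) over
the Gaussian family. -/
theorem stmt_10 (m : ℕ) (hm : 0 < m)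
    (p : Measure (Fin m → ℝ)) [IsProbabilityMeasure p]
    (h2 : Integrable (fun x : Fin m → ℝ => ‖x‖ ^ 2) p) :
    let mb : Fin m → ℝ := ∫ x, x ∂p
    let S : Matrix (Fin m) (Fin m) ℝ :=
      Matrix.of fun i j => ∫ x, (x i - mb i) * (x j - mb j) ∂p
    let q : (Fin m → ℝ) → Matrix (Fin m) (Fin m) ℝ → (Fin m → ℝ) → ℝ :=
      fun μ Sg x =>
        (2 * Real.pi) ^ (-(m : ℝ) / 2) * Sg.det ^ (-(1 : ℝ) / 2) *
          Real.exp (-(1 / 2) * ((x - μ) ⬝ᵥ (Sg⁻¹ *ᵥ (x - μ))))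
    S.PosDef →
    ∀ (μ : Fin m → ℝ) (Sg : Matrix (Fin m) (Fin m) ℝ), Sg.PosDef →
      (-(∫ x, Real.log (q mb S x) ∂p) ≤ -(∫ x, Real.log (q μ Sg x) ∂p)) ∧
      ((-(∫ x, Real.log (q μ Sg x) ∂p) = -(∫ x, Real.log (q mb S x) ∂p)) ↔
        (μ = mb ∧ Sg = S)) := by
  intro _ _ _ hS μ Sg hSg
  have hp : MemLp id 2 p := (memLp_two_iff_integrable_sq_norm (by fun_prop)).2 h2
  have gaussian_min := stmt_10_general hp hS μ hSg
  simp only [crossEntropy, gaussianDensity, Fintype.card_fin] at gaussian_min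
  exact gaussian_min
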